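/- Let ρ be an endomorphism of a C*-algebra A. Then Z^ρ := { f ∈ ZM(A) : ρ(fa) = f ρ(a) for all a ∈ A } is a unital C*-subalgebra of ZM(A), so that A is a Z^ρ-algebra and ρ is Z^ρ-equivariant; moreover Z^ρ is an invariant of the sector of ρ: if σ(a) = u ρ(a) u* for all a ∈ A, where u ∈ M(A) is unitary, then Z^σ = Z^ρ. -/

import Mathlib

/-!
STATEMENT 2: Let `ρ` be an endomorphism of a C*-algebra `A`. Then
`Z^ρ := { f ∈ ZM(A) : ρ(fa) = f ρ(a) for all a ∈ A }` is a unital C*-subalgebra of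
`ZM(A)` (the centre of the multiplier algebra `M(A)`), so that `A` is a `Z^ρ`-algebra
and `ρ` is `Z^ρ`-equivariant; moreover `Z^ρ` is an invariant of the sector of `ρ`:
if `σ(a) = u ρ(a) u*` for all `a ∈ A` with `u ∈ M(A)` unitary, then `Z^σ = Z^ρ`.

Here the multiplier algebra is realized as the double centralizer algebra `𝓜(ℂ, A)`,
and for a multiplier `f` and `a ∈ A` the product `f·a ∈ A` is `f.fst a` (the left
action) while `a·f` is `f.snd a` (the right action).
-/

open scoped MultiplierAlgebra

/-- `Z^ρ ⊆ M(A)`: the central multipliers `f` such that `ρ(f·a) = f·ρ(a)` for all `a`. -/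
def sectorCenter {A : Type*} [NonUnitalCStarAlgebra A] (ρ : A →⋆ₙₐ[ℂ] A) :
    Set 𝓜(ℂ, A) :=
  {f : 𝓜(ℂ, A) | f ∈ Set.center 𝓜(ℂ, A) ∧ ∀ a : A, ρ (f.fst a) = f.fst (ρ a)}

/-!
Since `f·a`, viewed in `M(A)`, is the product `f * a`, and `A` embeds in `M(A)`, identities in `A`
involving multipliers become ring identities in `M(A)`. A central multiplier acts equally on both
sides, which turns equivariance of `f` into equivariance of `f*`. Norm-closedness comes from the
automatic continuity of `ρ`. Finally, a central `f` passes through `u` in `u ρ(a) v`, so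
`Z^ρ ⊆ Z^σ` when `σ = u ρ(·) v`; if `v u = 1` then `ρ = v σ(·) u`, and the roles can be exchanged.
-/

section CStarRing

variable {R : Type*} [NonUnitalNormedRing R] [StarRing R] [CStarRing R] {a b : R}

theorem eq_of_forall_mul_left_eq (h : ∀ x, x * a = x * b) : a = b := by
  rw [← sub_eq_zero, ← CStarRing.star_mul_self_eq_zero_iff, mul_sub, h, sub_self]

theorem eq_of_forall_mul_right_eq (h : ∀ x, a * x = b * x) : a = b := by
  rw [← sub_eq_zero, ← CStarRing.mul_star_self_eq_zero_iff, sub_mul, h, sub_self]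

end CStarRing

section DoubleCentralizer

variable {𝕜 A : Type*} [NontriviallyNormedField 𝕜] [NonUnitalNormedRing A] [NormedSpace 𝕜 A]
  [SMulCommClass 𝕜 A A] [IsScalarTower 𝕜 A A]

theorem continuous_multiplier_fst_apply (a : A) : Continuous fun f : 𝓜(𝕜, A) => f.fst a := by
  have hfst : Continuous fun f : 𝓜(𝕜, A) => f.fst :=
    DoubleCentralizer.isUniformEmbedding_toProdMulOpposite.uniformContinuous.continuous.fst
  exact hfst.clm_apply continuous_const

theorem multiplier_fst_mul_of_mem_center {f : 𝓜(𝕜, A)} (hf : f ∈ Set.center 𝓜(𝕜, A)) (a b : A) :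
    f.fst (a * b) = a * f.fst b := by
  have hcomm : f * (a : 𝓜(𝕜, A)) = (a : 𝓜(𝕜, A)) * f := hf.comm _
  exact congrArg (fun g : 𝓜(𝕜, A) => g.fst b) hcomm

variable [StarRing A] [CStarRing A]

theorem multiplier_fst_mul (f : 𝓜(𝕜, A)) (a b : A) : f.fst (a * b) = f.fst a * b := by
  refine eq_of_forall_mul_left_eq fun x => ?_
  calc x * f.fst (a * b) = f.snd x * a * b := by rw [← f.central, mul_assoc]
    _ = x * (f.fst a * b) := by rw [f.central, mul_assoc]

theorem multiplier_coe_injective : Function.Injective ((↑) : A → 𝓜(𝕜, A)) := by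
  intro a b hab
  exact eq_of_forall_mul_right_eq fun x => congrArg (fun f : 𝓜(𝕜, A) => f.fst x) hab

theorem multiplier_coe_fst_apply (f : 𝓜(𝕜, A)) (a : A) :
    (f.fst a : 𝓜(𝕜, A)) = f * (a : 𝓜(𝕜, A)) := by
  ext x
  · exact (multiplier_fst_mul f a x).symm
  · exact (f.central x a).symm

theorem multiplier_fst_apply_eq_snd_apply_of_mem_center {f : 𝓜(𝕜, A)}
    (hf : f ∈ Set.center 𝓜(𝕜, A)) (a : A) : f.fst a = f.snd a := by
  refine eq_of_forall_mul_right_eq fun x => ?_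
  calc f.fst a * x = f.fst (a * x) := (multiplier_fst_mul f a x).symm
    _ = a * f.fst x := multiplier_fst_mul_of_mem_center hf a x
    _ = f.snd a * x := (f.central a x).symm

end DoubleCentralizer

section SectorCenter

variable {A : Type*} [NonUnitalCStarAlgebra A]

/-- `Z^ρ` bundled as a unital `*`-subalgebra of `M(A)`, for access to the closure lemmas of
`StarSubalgebra`. -/
def sectorCenterStarSubalgebra (ρ : A →⋆ₙₐ[ℂ] A) : StarSubalgebra ℂ 𝓜(ℂ, A) where
  carrier := sectorCenter ρ
  add_mem' := by
    rintro f g ⟨hf, hρf⟩ ⟨hg, hρg⟩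
    refine ⟨Set.add_mem_center hf hg, fun a => ?_⟩
    simp only [DoubleCentralizer.add_fst, add_apply, map_add, hρf, hρg]
  mul_mem' := by
    rintro f g ⟨hf, hρf⟩ ⟨hg, hρg⟩
    refine ⟨Set.mul_mem_center hf hg, fun a => ?_⟩
    simp only [DoubleCentralizer.mul_fst, mul_apply_eq_comp, hρf, hρg]
  algebraMap_mem' c := ⟨Set.algebraMap_mem_center c, map_smul ρ c⟩
  star_mem' := by
    rintro f ⟨hf, hρf⟩
    refine ⟨Set.star_mem_center hf, fun a => ?_⟩
    simp only [DoubleCentralizer.star_fst,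
      ← multiplier_fst_apply_eq_snd_apply_of_mem_center hf, map_star, hρf]

open scoped CStarAlgebra in
theorem isClosed_sectorCenter (ρ : A →⋆ₙₐ[ℂ] A) : IsClosed (sectorCenter ρ) := by
  have center_closed : IsClosed (Set.center 𝓜(ℂ, A)) :=
    Set.centralizer_univ 𝓜(ℂ, A) ▸ Set.isClosed_centralizer _
  have equivariant_closed : IsClosed {f : 𝓜(ℂ, A) | ∀ a, ρ (f.fst a) = f.fst (ρ a)} := by
    rw [Set.ofPred_forall]
    exact isClosed_iInter fun a => isClosed_eq
      ((map_continuous ρ).comp (continuous_multiplier_fst_apply a))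
      (continuous_multiplier_fst_apply (ρ a))
  exact center_closed.inter equivariant_closed

theorem sectorCenter_subset_of_eq_mul_mul {ρ σ : A →⋆ₙₐ[ℂ] A} {u v : 𝓜(ℂ, A)}
    (hσ : ∀ a, (σ a : 𝓜(ℂ, A)) = u * (ρ a : 𝓜(ℂ, A)) * v) :
    sectorCenter ρ ⊆ sectorCenter σ := by
  rintro f ⟨hf, hρf⟩
  refine ⟨hf, fun a => multiplier_coe_injective (𝕜 := ℂ) ?_⟩
  calc (σ (f.fst a) : 𝓜(ℂ, A))
      = u * (f * (ρ a : 𝓜(ℂ, A))) * v := by rw [hσ, hρf, multiplier_coe_fst_apply]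
    _ = u * f * (ρ a : 𝓜(ℂ, A)) * v := by rw [mul_assoc u f]
    _ = f * (u * (ρ a : 𝓜(ℂ, A)) * v) := by rw [← hf.comm u]; simp only [mul_assoc]
    _ = (f.fst (σ a) : 𝓜(ℂ, A)) := by rw [← hσ, multiplier_coe_fst_apply]

theorem sectorCenter_eq_of_eq_mul_mul {ρ σ : A →⋆ₙₐ[ℂ] A} {u v : 𝓜(ℂ, A)} (hvu : v * u = 1)
    (hσ : ∀ a, (σ a : 𝓜(ℂ, A)) = u * (ρ a : 𝓜(ℂ, A)) * v) :
    sectorCenter σ = sectorCenter ρ := by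
  have hρ (a : A) : (ρ a : 𝓜(ℂ, A)) = v * (σ a : 𝓜(ℂ, A)) * u := by
    calc (ρ a : 𝓜(ℂ, A))
        = (v * u) * (ρ a : 𝓜(ℂ, A)) * (v * u) := by rw [hvu, one_mul, mul_one]
      _ = v * (u * (ρ a : 𝓜(ℂ, A)) * v) * u := by simp only [mul_assoc]
      _ = v * (σ a : 𝓜(ℂ, A)) * u := by rw [hσ]
  exact (sectorCenter_subset_of_eq_mul_mul hρ).antisymm (sectorCenter_subset_of_eq_mul_mul hσ)

end SectorCenter

theorem sectorCenter_is_unital_cstar_subalgebra_and_sector_invariant_general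
    {A : Type*} [NonUnitalCStarAlgebra A] (ρ : A →⋆ₙₐ[ℂ] A) :
    (1 : 𝓜(ℂ, A)) ∈ sectorCenter ρ ∧
    (∀ f ∈ sectorCenter ρ, ∀ g ∈ sectorCenter ρ, f + g ∈ sectorCenter ρ) ∧
    (∀ f ∈ sectorCenter ρ, ∀ g ∈ sectorCenter ρ, f * g ∈ sectorCenter ρ) ∧
    (∀ (c : ℂ), ∀ f ∈ sectorCenter ρ, c • f ∈ sectorCenter ρ) ∧
    (∀ f ∈ sectorCenter ρ, star f ∈ sectorCenter ρ) ∧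
    IsClosed (sectorCenter ρ) ∧
    (∀ f ∈ sectorCenter ρ, ∀ g, f * g = g * f) ∧
    (∀ f ∈ sectorCenter ρ, ∀ a : A, f.fst a = f.snd a) ∧
    (∀ f ∈ sectorCenter ρ, ∀ a b : A, f.fst (a * b) = a * f.fst b ∧
      f.fst (a * b) = f.fst a * b) ∧
    (∀ f ∈ sectorCenter ρ, ∀ a : A, ρ (f.fst a) = f.fst (ρ a)) ∧
    (∀ (σ : A →⋆ₙₐ[ℂ] A) (u v : 𝓜(ℂ, A)), v * u = 1 →
      (∀ a : A, (σ a : 𝓜(ℂ, A)) = u * (ρ a : 𝓜(ℂ, A)) * v) →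
      sectorCenter σ = sectorCenter ρ) := by
  let Z := sectorCenterStarSubalgebra ρ
  exact ⟨Z.one_mem, fun f hf g hg => Z.add_mem hf hg, fun f hf g hg => Z.mul_mem hf hg,
    fun c f hf => Z.smul_mem hf c, fun f hf => star_mem (s := Z) hf, isClosed_sectorCenter ρ,
    fun f hf g => hf.1.comm g,
    fun f hf => multiplier_fst_apply_eq_snd_apply_of_mem_center hf.1,
    fun f hf a b => ⟨multiplier_fst_mul_of_mem_center hf.1 a b, multiplier_fst_mul f a b⟩,
    fun f hf => hf.2,
    fun σ u v hvu hσ => sectorCenter_eq_of_eq_mul_mul hvu hσ⟩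

theorem sectorCenter_is_unital_cstar_subalgebra_and_sector_invariant
    {A : Type*} [NonUnitalCStarAlgebra A] (ρ : A →⋆ₙₐ[ℂ] A) :
    -- `Z^ρ` is a unital *-subalgebra of the centre of `M(A)` ...
    (1 : 𝓜(ℂ, A)) ∈ sectorCenter ρ ∧
    (∀ f ∈ sectorCenter ρ, ∀ g ∈ sectorCenter ρ, f + g ∈ sectorCenter ρ) ∧
    (∀ f ∈ sectorCenter ρ, ∀ g ∈ sectorCenter ρ, f * g ∈ sectorCenter ρ) ∧
    (∀ (c : ℂ), ∀ f ∈ sectorCenter ρ, c • f ∈ sectorCenter ρ) ∧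
    (∀ f ∈ sectorCenter ρ, star f ∈ sectorCenter ρ) ∧
    -- ... which is norm-closed (hence a unital commutative C*-algebra):
    IsClosed (sectorCenter ρ) ∧
    (∀ f ∈ sectorCenter ρ, ∀ g ∈ sectorCenter ρ, f * g = g * f) ∧
    -- `A` is a `Z^ρ`-algebra: elements of `Z^ρ` are central multipliers of `A`
    -- (left and right actions coincide and commute with multiplication in `A`) ...
    (∀ f ∈ sectorCenter ρ, ∀ a : A, f.fst a = f.snd a) ∧
    (∀ f ∈ sectorCenter ρ, ∀ a b : A, f.fst (a * b) = a * f.fst b ∧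
      f.fst (a * b) = f.fst a * b) ∧
    -- ... and `ρ` is `Z^ρ`-equivariant:
    (∀ f ∈ sectorCenter ρ, ∀ a : A, ρ (f.fst a) = f.fst (ρ a)) ∧
    -- `Z^ρ` is an invariant of the sector of `ρ`:
    (∀ (σ : A →⋆ₙₐ[ℂ] A) (u : 𝓜(ℂ, A)), star u * u = 1 → u * star u = 1 →
      (∀ a : A, (σ a : 𝓜(ℂ, A)) = u * (ρ a : 𝓜(ℂ, A)) * star u) →
      sectorCenter σ = sectorCenter ρ) := by
  obtain ⟨hone, hadd, hmul, hsmul, hstar, hclosed, hcomm, hact, hbimod, hequiv, hsector⟩ :=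
    sectorCenter_is_unital_cstar_subalgebra_and_sector_invariant_general ρ
  exact ⟨hone, hadd, hmul, hsmul, hstar, hclosed, fun f hf g _ => hcomm f hf g, hact, hbimod,
    hequiv, fun σ u hu _ hσ => hsector σ u (star u) hu hσ⟩
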